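/- Adding a parallel bidirected edge between already bidirectedly connected strongly connected components preserves the E-separation model: let G = (V, E_d, E_bi) be a DMG and i, j ∈ V with i ≠ j, {i, j} ∉ E_bi, and i ∉ scc_G(j), and suppose there exist i′ ∈ scc_G(i) and j′ ∈ scc_G(j) with {i′, j′} ∈ E_bi; let G′ = (V, E_d, E_bi ∪ {{i, j}}). Then I_E^G = I_E^{G′}. -/

import Mathlib

namespace ESepPaper

/-- A directed mixed graph: directed edges and bidirected edges over a node type `V`.
A directed graph (DG) is a DMG with `Ebi = ∅`. -/
structure DMG (V : Type) where
  Ed : Set (V × V)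
  Ebi : Set (Sym2 V)

variable {V : Type}

/-- `G.ancestor u v` : there is a directed path `u → … → v` (possibly trivial). -/
def DMG.ancestor (G : DMG V) : V → V → Prop :=
  Relation.ReflTransGen (fun u v => (u, v) ∈ G.Ed)

/-- Ancestors of a set `C`. -/
def DMG.anc (G : DMG V) (C : Set V) : Set V := {u | ∃ v ∈ C, G.ancestor u v}

/-- Strongly connected component of `v`. -/
def DMG.scc (G : DMG V) (v : V) : Set V := {w | G.ancestor w v ∧ G.ancestor v w}

/-- Parents of a set of nodes. -/
def DMG.pa (G : DMG V) (S : Set V) : Set V := {w | ∃ v ∈ S, (w, v) ∈ G.Ed}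

/-- Kind of a traversed edge on a walk: forward directed, backward directed, or bidirected. -/
inductive LinkType | fwd | bwd | bi
deriving DecidableEq

/-- Validity of a link of kind `t` between consecutive walk nodes `u` and `v`. -/
def DMG.linkOK (G : DMG V) (u v : V) : LinkType → Prop
  | .fwd => (u, v) ∈ G.Ed
  | .bwd => (v, u) ∈ G.Ed
  | .bi => s(u, v) ∈ G.Ebi

/-- Arrowhead at the second (right) endpoint of the link. -/
def LinkType.headR : LinkType → Prop
  | .fwd => True
  | .bwd => False
  | .bi => True

/-- Arrowhead at the first (left) endpoint of the link. -/
def LinkType.headL : LinkType → Prop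
  | .fwd => False
  | .bwd => True
  | .bi => True

/-- Tail at the second (right) endpoint. -/
def LinkType.tailR (t : LinkType) : Prop := t = .bwd

/-- Tail at the first (left) endpoint. -/
def LinkType.tailL (t : LinkType) : Prop := t = .fwd

/-- Walks in a DMG. -/
inductive DMG.Walk (G : DMG V) : V → V → Type
  | nil (v : V) : DMG.Walk G v v
  | cons {u v w : V} (t : LinkType) (h : G.linkOK u v t) (p : DMG.Walk G v w) : DMG.Walk G u w

/-- An interior node on a walk, whose incoming link is `t1` and outgoing link is `t2`,
is a collider iff both links have an arrowhead at it. -/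
def colliderAt (t1 t2 : LinkType) : Prop := t1.headR ∧ t2.headL

/-- An interior non-collider `v` between neighbours `u` (incoming link `t1`) and `w`
(outgoing link `t2`) is unblockable: on every side where the link has a tail at `v`, the
corresponding neighbour lies in `scc_G(v)` (left-chain/right-chain/fork cases). -/
def unblockableAt (G : DMG V) (u v w : V) (t1 t2 : LinkType) : Prop :=
  (t1.tailR → u ∈ G.scc v) ∧ (t2.tailL → w ∈ G.scc v)

namespace DMG.Walk

variable {G : DMG V}

/-- First node of a walk. -/
def first {a b : V} (_ : G.Walk a b) : V := a

def length : {a b : V} → G.Walk a b → ℕ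
  | _, _, .nil _ => 0
  | _, _, .cons _ _ p => p.length + 1

def support : {a b : V} → G.Walk a b → List V
  | a, _, .nil _ => [a]
  | a, _, .cons _ _ p => a :: p.support

/-- Auxiliary: σ-openness of the remainder of a walk, where `u` is the previous node and
`t1` the link from `u` into the current first node. -/
def sigmaOpenAux (C : Set V) : (u : V) → LinkType → {b c : V} → G.Walk b c → Prop
  | _, _, _, _, .nil _ => True
  | u, t1, v, _, .cons t2 _ q =>
      ((colliderAt t1 t2 → v ∈ G.anc C) ∧
       (¬ colliderAt t1 t2 → ¬ unblockableAt G u v q.first t1 t2 → v ∉ C)) ∧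
      sigmaOpenAux C v t2 q

/-- The walk is σ-open given `C`: every collider on it is an ancestor of a node of `C`, and
no blockable non-collider on it lies in `C`. -/
def sigmaOpen (C : Set V) : {a b : V} → G.Walk a b → Prop
  | _, _, .nil _ => True
  | a, _, .cons t _ q => sigmaOpenAux C a t q

/-- All links are forward directed. -/
def IsDirected : {a b : V} → G.Walk a b → Prop
  | _, _, .nil _ => True
  | _, _, .cons t _ p => t = .fwd ∧ p.IsDirected

/-- Interior nodes of the walk (all nodes except the two endpoints). -/
def interior {a b : V} (p : G.Walk a b) : List V := p.support.tail.dropLast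

/-- Arrowhead at the first endpoint. -/
def headAtStart : {a b : V} → G.Walk a b → Prop
  | _, _, .nil _ => False
  | _, _, .cons t _ _ => t.headL

def headAtEndAux : LinkType → {a b : V} → G.Walk a b → Prop
  | t, _, _, .nil _ => t.headR
  | _, _, _, .cons t _ q => headAtEndAux t q

/-- Arrowhead at the last endpoint. -/
def headAtEnd : {a b : V} → G.Walk a b → Prop
  | _, _, .nil _ => False
  | _, _, .cons t _ q => headAtEndAux t q

def noCollidersAux : LinkType → {a b : V} → G.Walk a b → Prop
  | _, _, _, .nil _ => True
  | t1, _, _, .cons t2 _ q => ¬ colliderAt t1 t2 ∧ noCollidersAux t2 q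

/-- There is no collider on the walk. -/
def NoColliders : {a b : V} → G.Walk a b → Prop
  | _, _, .nil _ => True
  | _, _, .cons t _ q => noCollidersAux t q

def collidersInAux (S : Set V) : LinkType → {a b : V} → G.Walk a b → Prop
  | _, _, _, .nil _ => True
  | t1, v, _, .cons t2 _ q => (colliderAt t1 t2 → v ∈ S) ∧ collidersInAux S t2 q

/-- Every collider on the walk lies in `S`. -/
def CollidersIn (S : Set V) : {a b : V} → G.Walk a b → Prop
  | _, _, .nil _ => True
  | _, _, .cons t _ q => collidersInAux S t q

def noncollUnblAux : (u : V) → LinkType → {b c : V} → G.Walk b c → Prop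
  | _, _, _, _, .nil _ => True
  | u, t1, v, _, .cons t2 _ q =>
      (¬ colliderAt t1 t2 → unblockableAt G u v q.first t1 t2) ∧ noncollUnblAux v t2 q

/-- Every interior non-collider on the walk is unblockable. -/
def NoncollidersUnblockable : {a b : V} → G.Walk a b → Prop
  | _, _, .nil _ => True
  | a, _, .cons t _ q => noncollUnblAux a t q

/-- The set of edges occurring on a walk (directed edges as ordered pairs in `E_d`,
bidirected edges as unordered pairs). -/
def edges : {a b : V} → G.Walk a b → Set ((V × V) ⊕ Sym2 V)
  | _, _, .nil _ => ∅
  | a, _, .cons t _ p =>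
      insert (match t with
        | .fwd => Sum.inl (a, p.first)
        | .bwd => Sum.inl (p.first, a)
        | .bi => Sum.inr s(a, p.first)) p.edges

/-- Concatenation of walks. -/
def append : {a b c : V} → G.Walk a b → G.Walk b c → G.Walk a c
  | _, _, _, .nil _, q => q
  | _, _, _, .cons t h p, q => .cons t h (p.append q)

/-- A walk `v_0, …, v_{n+1}` is a path if no node besides the final endpoint occurs more
than once, i.e. `v_0, …, v_n` are pairwise distinct. -/
def IsPath {a b : V} (p : G.Walk a b) : Prop := p.support.dropLast.Nodup

end DMG.Walk

/-- `A` is σ-separated from `B` given `C` in `G`: every walk from a node of `A` to a node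
of `B` is σ-blocked given `C`. -/
def DMG.sigmaSep (G : DMG V) (A B C : Set V) : Prop :=
  ∀ a ∈ A, ∀ b ∈ B, ∀ p : G.Walk a b, ¬ p.sigmaOpen C

/-- The lifted dependency graph of `G`, on two copies of `V`
(`Sum.inl` is the past copy `V_0`, `Sum.inr` the future copy `V_1`). -/
def DMG.lift (G : DMG V) : DMG (V ⊕ V) where
  Ed := {e | ∃ u v, (u, v) ∈ G.Ed ∧
        (e = (Sum.inl u, Sum.inl v) ∨ e = (Sum.inl u, Sum.inr v) ∨
         e = (Sum.inr u, Sum.inr v))}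
  Ebi := {e | ∃ u v, s(u, v) ∈ G.Ebi ∧
        (e = s(Sum.inl u, Sum.inl v) ∨ e = s(Sum.inl u, Sum.inr v) ∨
         e = s(Sum.inr u, Sum.inl v) ∨ e = s(Sum.inr u, Sum.inr v))}

/-- `B` is E-separated from `A` given `C` in `G`:
`A_0` is σ-separated from `B_1` given `C_0 ∪ (C_1 \ B_1)` in the lifted dependency graph. -/
def DMG.ESep (G : DMG V) (A B C : Set V) : Prop :=
  G.lift.sigmaSep (Sum.inl '' A) (Sum.inr '' B)
    ((Sum.inl '' C) ∪ ((Sum.inr '' C) \ (Sum.inr '' B)))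

/-- The independence model `I_E^G` of E-separation triples. -/
def DMG.IE (G : DMG V) : Set (Set V × Set V × Set V) :=
  {t | G.ESep t.1 t.2.1 t.2.2}


/-- The latent projection of `G` onto the observed nodes `O`: a directed edge when there is
a non-trivial directed walk whose interior nodes are all latent, and a bidirected edge when
there is a non-trivial collider-free walk with arrowheads at both endpoints whose interior
nodes are all latent. -/
def DMG.latentProj (G : DMG V) (O : Set V) : DMG O where
  Ed := {e | ∃ p : G.Walk e.1.val e.2.val,
          p.IsDirected ∧ 0 < p.length ∧ ∀ x ∈ p.interior, x ∉ O}
  Ebi := {e | ∃ u v : O, e = s(u, v) ∧ ∃ p : G.Walk u.val v.val,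
          p.headAtStart ∧ p.headAtEnd ∧ p.NoColliders ∧ 0 < p.length ∧
          ∀ x ∈ p.interior, x ∉ O}

/-- The last edge of the walk `p` before entering `scc_G(w)` has an arrowhead at its
endpoint in `scc_G(w)` (vacuous if the walk never leaves `scc_G(w)`). -/
def DMG.lastEdgeInto (G : DMG V) {a b : V} (w : V) (p : G.Walk a b) : Prop :=
  (∀ x ∈ p.support, x ∈ G.scc w) ∨
  ∃ (x y : V) (t : LinkType) (h : G.linkOK x y t) (p₁ : G.Walk a x) (p₂ : G.Walk y b),
    p = p₁.append (.cons t h p₂) ∧ x ∉ G.scc w ∧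
    (∀ z ∈ p₂.support, z ∈ G.scc w) ∧ t.headR

/-- An (asymmetric) inducing path from `v` to `w`: a non-trivial path such that every
collider on it is an ancestor of `v` or `w`, every interior non-collider is unblockable,
and the last edge before entering `scc_G(w)` points into `scc_G(w)`. -/
def DMG.IsInducingPath (G : DMG V) {v w : V} (p : G.Walk v w) : Prop :=
  0 < p.length ∧ p.IsPath ∧
  p.CollidersIn (G.anc {v, w}) ∧ p.NoncollidersUnblockable ∧ G.lastEdgeInto w p

/-!
The openness of a walk through a bidirected edge `x ↔ y` depends on that edge only through its
arrowheads at `x` and `y`. If `x' ∈ scc x`, `y' ∈ scc y` and `x' ↔ y'`, then the detour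
`x ← ⋯ ← x' ↔ y' → ⋯ → y`, with both directed parts running inside a strongly connected component,
also has arrowheads at `x` and `y`, has no colliders, and all its interior nodes are unblockable.
Replacing `x ↔ y` by the detour thus keeps the walk open, whatever the conditioning set. Such detours
lift to the lifted dependency graph because each copy of a strongly connected component is strongly
connected.
-/

namespace LinkType

theorem not_tailL_iff {t : LinkType} : ¬ t.tailL ↔ t.headL := by
  cases t <;> simp [tailL, headL]

theorem not_tailR_iff {t : LinkType} : ¬ t.tailR ↔ t.headR := by
  cases t <;> simp [tailR, headR]

end LinkType

namespace DMG

variable {G H : DMG V} {C : Set V}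

theorem ancestor.mono (hEd : H.Ed ⊆ G.Ed) {u v : V} (h : H.ancestor u v) : G.ancestor u v :=
  Relation.ReflTransGen.mono (fun _ _ huv => hEd huv) _ _ h

theorem anc_mono (hEd : H.Ed ⊆ G.Ed) (C : Set V) : H.anc C ⊆ G.anc C :=
  fun _ ⟨v, hv, huv⟩ => ⟨v, hv, huv.mono hEd⟩

theorem scc_mono (hEd : H.Ed ⊆ G.Ed) (v : V) : H.scc v ⊆ G.scc v :=
  fun _ h => ⟨h.1.mono hEd, h.2.mono hEd⟩

theorem mem_scc_self (G : DMG V) (v : V) : v ∈ G.scc v :=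
  ⟨.refl, .refl⟩

/-- The condition that σ-openness given `C` imposes on an interior node `v` of a walk, entered
from `u` by a link of type `t` and left towards `w` by a link of type `s`. -/
def NodeOpen (G : DMG V) (C : Set V) (u v w : V) (t s : LinkType) : Prop :=
  (colliderAt t s → v ∈ G.anc C) ∧
    (¬ colliderAt t s → ¬ unblockableAt G u v w t s → v ∉ C)

namespace NodeOpen

variable {u u' v w w' : V} {t t' s s' : LinkType}

theorem mono (hEd : H.Ed ⊆ G.Ed) (h : H.NodeOpen C u v w t s) : G.NodeOpen C u v w t s := by
  refine ⟨fun hcol => anc_mono hEd C (h.1 hcol), fun hcol hblock => h.2 hcol fun hunbl => ?_⟩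
  exact hblock ⟨fun ht => scc_mono hEd v (hunbl.1 ht), fun hs => scc_mono hEd v (hunbl.2 hs)⟩

theorem congr_headR (ht : t.headR) (ht' : t'.headR) (h : G.NodeOpen C u v w t s) :
    G.NodeOpen C u' v w t' s := by
  have hnt := LinkType.not_tailR_iff.2 ht
  have hnt' := LinkType.not_tailR_iff.2 ht'
  simpa [NodeOpen, colliderAt, unblockableAt, ht, ht', hnt, hnt'] using h

theorem congr_headL (hs : s.headL) (hs' : s'.headL) (h : G.NodeOpen C u v w t s) :
    G.NodeOpen C u v w' t s' := by
  have hns := LinkType.not_tailL_iff.2 hs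
  have hns' := LinkType.not_tailL_iff.2 hs'
  simpa [NodeOpen, colliderAt, unblockableAt, hs, hs', hns, hns'] using h

theorem fwd_of_mem_scc (ht : t.headR) (hw : w ∈ G.scc v) : G.NodeOpen C u v w t .fwd :=
  ⟨fun hcol => hcol.2.elim,
    fun _ hblock => (hblock ⟨fun htail => (LinkType.not_tailR_iff.2 ht htail).elim,
      fun _ => hw⟩).elim⟩

theorem bwd_of_mem_scc (hs : s.headL) (hu : u ∈ G.scc v) : G.NodeOpen C u v w .bwd s :=
  ⟨fun hcol => hcol.1.elim,
    fun _ hblock => (hblock ⟨fun _ => hu,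
      fun htail => (LinkType.not_tailL_iff.2 hs htail).elim⟩).elim⟩

end NodeOpen

namespace Walk

variable {u v w x y c : V} {t s : LinkType}

theorem sigmaOpenAux_cons {h : G.linkOK v w s} {p : G.Walk w c} :
    (cons s h p).sigmaOpenAux C u t ↔ G.NodeOpen C u v w t s ∧ p.sigmaOpenAux C v s :=
  Iff.rfl

/-- The walk `p` stays open given `C` when a link with an arrowhead at the first node of `p` is put
in front of it, as far as the nodes of `p` are concerned. -/
def OpenAfterHead (C : Set V) (p : G.Walk v c) : Prop :=
  ∀ u t, t.headR → p.sigmaOpenAux C u t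

theorem openAfterHead_of_sigmaOpenAux {p : G.Walk v c} (ht : t.headR)
    (h : p.sigmaOpenAux C u t) : p.OpenAfterHead C := by
  intro u' t' ht'
  cases p with
  | nil => trivial
  | cons s hs q =>
    obtain ⟨hnode, hrest⟩ := sigmaOpenAux_cons.1 h
    exact sigmaOpenAux_cons.2 ⟨hnode.congr_headR ht ht', hrest⟩

theorem OpenAfterHead.cons_fwd {p : G.Walk y c} (hp : p.OpenAfterHead C)
    (hxy : G.linkOK x y .fwd) (hy : y ∈ G.scc x) : (cons .fwd hxy p).OpenAfterHead C :=
  fun _ _ ht => sigmaOpenAux_cons.2 ⟨.fwd_of_mem_scc ht hy, hp x .fwd trivial⟩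

theorem exists_openAfterHead_of_mem_scc {p : G.Walk v c} (hp : p.OpenAfterHead C)
    (hx : x ∈ G.scc v) : ∃ q : G.Walk x c, q.OpenAfterHead C := by
  obtain ⟨hxv, hvx⟩ := hx
  induction hxv using Relation.ReflTransGen.head_induction_on with
  | refl => exact ⟨p, hp⟩
  | @head x y hxy hyv ih =>
    obtain ⟨q, hq⟩ := ih (hvx.tail hxy)
    exact ⟨cons .fwd hxy q, hq.cons_fwd hxy ⟨hyv.trans hvx, .single hxy⟩⟩

theorem sigmaOpenAux_of_headAtStart {p : G.Walk v c} (hhead : p.headAtStart)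
    (hp : p.sigmaOpen C) (hs : s.headL) (hv : G.NodeOpen C u v w t s) :
    p.sigmaOpenAux C u t := by
  cases p with
  | nil => trivial
  | cons s' h q => exact sigmaOpenAux_cons.2 ⟨hv.congr_headL hs hhead, hp⟩

theorem sigmaOpen_cons_bwd {p : G.Walk x c} (hhead : p.headAtStart) (hp : p.sigmaOpen C)
    (hxy : G.linkOK y x .bwd) (hy : y ∈ G.scc x) : (cons .bwd hxy p).sigmaOpen C :=
  sigmaOpenAux_of_headAtStart (w := x) (s := .bwd) hhead hp trivial (.bwd_of_mem_scc trivial hy)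

theorem exists_headAtStart_sigmaOpen_of_mem_scc {p : G.Walk x c} (hhead : p.headAtStart)
    (hp : p.sigmaOpen C) (hx : x ∈ G.scc y) :
    ∃ q : G.Walk y c, q.headAtStart ∧ q.sigmaOpen C := by
  obtain ⟨hxy, hyx⟩ := hx
  induction hxy with
  | refl => exact ⟨p, hhead, hp⟩
  | @tail z y hxz hzy ih =>
    obtain ⟨q, hqhead, hq⟩ := ih (hyx.head hzy)
    exact ⟨cons .bwd hzy q, trivial, sigmaOpen_cons_bwd hqhead hq hzy ⟨hyx.trans hxz, .single hzy⟩⟩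

end Walk

/-- Some node of the strongly connected component of `x` is joined by a bidirected edge to some node
of the strongly connected component of `y`. -/
def BidirectedUpToScc (G : DMG V) (x y : V) : Prop :=
  ∃ x' ∈ G.scc x, ∃ y' ∈ G.scc y, s(x', y') ∈ G.Ebi

theorem BidirectedUpToScc.of_mem_Ebi {x y : V} (h : s(x, y) ∈ G.Ebi) : G.BidirectedUpToScc x y :=
  ⟨x, G.mem_scc_self x, y, G.mem_scc_self y, h⟩

theorem BidirectedUpToScc.symm {x y : V} :
    G.BidirectedUpToScc x y → G.BidirectedUpToScc y x :=
  fun ⟨x', hx, y', hy, h⟩ => ⟨y', hy, x', hx, Sym2.eq_swap ▸ h⟩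

theorem BidirectedUpToScc.exists_headAtStart_sigmaOpen {x y c : V}
    (hxy : G.BidirectedUpToScc x y) {p : G.Walk y c} (hp : p.OpenAfterHead C) :
    ∃ q : G.Walk x c, q.headAtStart ∧ q.sigmaOpen C := by
  obtain ⟨x', hx, y', hy, hedge⟩ := hxy
  obtain ⟨q, hq⟩ := Walk.exists_openAfterHead_of_mem_scc hp hy
  exact Walk.exists_headAtStart_sigmaOpen_of_mem_scc
    (p := .cons .bi hedge q) trivial (hq x' .bi trivial) hx

/-- `H` is a subgraph of `G`, except that a bidirected edge of `H` may have its endpoints moved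
within their strongly connected components of `G`. -/
structure IsSubgraphUpToScc (H G : DMG V) : Prop where
  Ed_subset : H.Ed ⊆ G.Ed
  bidirectedUpToScc : ∀ ⦃x y : V⦄, s(x, y) ∈ H.Ebi → G.BidirectedUpToScc x y

namespace IsSubgraphUpToScc

theorem exists_replace_first_link (hHG : H.IsSubgraphUpToScc G) {v w c : V} {s : LinkType}
    (h : H.linkOK v w s) {p : G.Walk w c} (hp : p.sigmaOpenAux C v s) :
    ∃ q : G.Walk v c, q.sigmaOpen C ∧
      ∀ u t, H.NodeOpen C u v w t s → q.sigmaOpenAux C u t := by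
  cases s with
  | fwd => exact ⟨.cons .fwd (hHG.Ed_subset h) p, hp, fun _ _ hv => ⟨hv.mono hHG.Ed_subset, hp⟩⟩
  | bwd => exact ⟨.cons .bwd (hHG.Ed_subset h) p, hp, fun _ _ hv => ⟨hv.mono hHG.Ed_subset, hp⟩⟩
  | bi =>
    obtain ⟨q, hhead, hq⟩ := (hHG.bidirectedUpToScc h).exists_headAtStart_sigmaOpen
      (Walk.openAfterHead_of_sigmaOpenAux (t := .bi) trivial hp)
    exact ⟨q, hq, fun _ _ hv =>
      Walk.sigmaOpenAux_of_headAtStart (s := .bi) hhead hq trivial (hv.mono hHG.Ed_subset)⟩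

theorem exists_sigmaOpenAux (hHG : H.IsSubgraphUpToScc G) {v c : V} (p : H.Walk v c) {u : V}
    {t : LinkType} (hp : p.sigmaOpenAux C u t) : ∃ q : G.Walk v c, q.sigmaOpenAux C u t := by
  induction p generalizing u t with
  | nil v => exact ⟨.nil v, trivial⟩
  | cons s h p ih =>
    obtain ⟨hnode, hrest⟩ := Walk.sigmaOpenAux_cons.1 hp
    obtain ⟨p', hp'⟩ := ih hrest
    obtain ⟨q, -, hq⟩ := hHG.exists_replace_first_link h hp'
    exact ⟨q, hq u t hnode⟩

theorem exists_sigmaOpen (hHG : H.IsSubgraphUpToScc G) {v c : V} (p : H.Walk v c)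
    (hp : p.sigmaOpen C) : ∃ q : G.Walk v c, q.sigmaOpen C := by
  cases p with
  | nil v => exact ⟨.nil v, trivial⟩
  | cons s h p =>
    obtain ⟨p', hp'⟩ := hHG.exists_sigmaOpenAux p hp
    obtain ⟨q, hq, -⟩ := hHG.exists_replace_first_link h hp'
    exact ⟨q, hq⟩

theorem sigmaSep (hHG : H.IsSubgraphUpToScc G) {A B : Set V} (h : G.sigmaSep A B C) :
    H.sigmaSep A B C := by
  intro a ha b hb p hp
  obtain ⟨q, hq⟩ := hHG.exists_sigmaOpen p hp
  exact h a ha b hb q hq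

end IsSubgraphUpToScc

/-- The node of which `x` is the past or the future copy in a lifted dependency graph. -/
def underlying : V ⊕ V → V :=
  Sum.elim id id

theorem mem_lift_Ebi {x y : V ⊕ V} :
    s(x, y) ∈ G.lift.Ebi ↔ s(underlying x, underlying y) ∈ G.Ebi := by
  constructor
  · rintro ⟨u, v, huv, h | h | h | h⟩ <;>
      obtain ⟨rfl, rfl⟩ | ⟨rfl, rfl⟩ := Sym2.eq_iff.1 h <;>
      first | exact huv | exact Sym2.eq_swap ▸ huv
  · intro h
    refine ⟨underlying x, underlying y, h, ?_⟩
    rcases x with u | u <;> rcases y with v | v <;> simp [underlying]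

theorem lift_Ed_mono (hEd : H.Ed ⊆ G.Ed) : H.lift.Ed ⊆ G.lift.Ed :=
  fun _ ⟨u, v, huv, he⟩ => ⟨u, v, hEd huv, he⟩

theorem ancestor.lift_inl {u v : V} (h : G.ancestor u v) :
    G.lift.ancestor (Sum.inl u) (Sum.inl v) :=
  Relation.ReflTransGen.lift Sum.inl (fun a b hab => ⟨a, b, hab, .inl rfl⟩) _ _ h

theorem ancestor.lift_inr {u v : V} (h : G.ancestor u v) :
    G.lift.ancestor (Sum.inr u) (Sum.inr v) :=
  Relation.ReflTransGen.lift Sum.inr (fun a b hab => ⟨a, b, hab, .inr (.inr rfl)⟩) _ _ h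

theorem exists_mem_scc_lift {x : V ⊕ V} {u : V} (hu : u ∈ G.scc (underlying x)) :
    ∃ x' ∈ G.lift.scc x, underlying x' = u := by
  cases x with
  | inl v => exact ⟨.inl u, ⟨hu.1.lift_inl, hu.2.lift_inl⟩, rfl⟩
  | inr v => exact ⟨.inr u, ⟨hu.1.lift_inr, hu.2.lift_inr⟩, rfl⟩

theorem BidirectedUpToScc.lift {x y : V ⊕ V}
    (h : G.BidirectedUpToScc (underlying x) (underlying y)) : G.lift.BidirectedUpToScc x y := by
  obtain ⟨u, hu, v, hv, huv⟩ := h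
  obtain ⟨x', hx', rfl⟩ := exists_mem_scc_lift hu
  obtain ⟨y', hy', rfl⟩ := exists_mem_scc_lift hv
  exact ⟨x', hx', y', hy', mem_lift_Ebi.2 huv⟩

namespace IsSubgraphUpToScc

theorem lift (hHG : H.IsSubgraphUpToScc G) : H.lift.IsSubgraphUpToScc G.lift where
  Ed_subset := lift_Ed_mono hHG.Ed_subset
  bidirectedUpToScc _ _ hxy := (hHG.bidirectedUpToScc (mem_lift_Ebi.1 hxy)).lift

theorem IE_subset (hHG : H.IsSubgraphUpToScc G) : G.IE ⊆ H.IE :=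
  fun _ h => hHG.lift.sigmaSep h

theorem insert_Ebi {i j : V} (hij : G.BidirectedUpToScc i j) :
    (DMG.mk G.Ed (insert s(i, j) G.Ebi)).IsSubgraphUpToScc G where
  Ed_subset := subset_rfl
  bidirectedUpToScc x y hxy := by
    rcases hxy with hnew | hold
    · obtain ⟨rfl, rfl⟩ | ⟨rfl, rfl⟩ := Sym2.eq_iff.1 hnew
      exacts [hij, hij.symm]
    · exact .of_mem_Ebi hold

end IsSubgraphUpToScc

theorem isSubgraphUpToScc_insert_Ebi (G : DMG V) (e : Sym2 V) :
    G.IsSubgraphUpToScc (DMG.mk G.Ed (insert e G.Ebi)) where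
  Ed_subset := subset_rfl
  bidirectedUpToScc _ _ hxy := .of_mem_Ebi (Set.mem_insert_of_mem _ hxy)

end DMG

theorem add_parallel_bidirected_edge_general (G : DMG V) {i j i' j' : V}
    (hi' : i' ∈ G.scc i) (hj' : j' ∈ G.scc j) (h' : s(i', j') ∈ G.Ebi) :
    G.IE = (DMG.mk G.Ed (insert s(i, j) G.Ebi)).IE :=
  Set.Subset.antisymm
    (DMG.IsSubgraphUpToScc.insert_Ebi ⟨i', hi', j', hj', h'⟩).IE_subset
    (G.isSubgraphUpToScc_insert_Ebi s(i, j)).IE_subset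

/-- Adding a parallel bidirected edge between strongly connected components that are
already bidirectedly connected preserves the E-separation independence model. -/
theorem add_parallel_bidirected_edge {V : Type} [Fintype V] (G : DMG V)
    (i j : V) (hij : i ≠ j) (hbi : s(i, j) ∉ G.Ebi) (hscc : i ∉ G.scc j)
    (i' : V) (hi' : i' ∈ G.scc i) (j' : V) (hj' : j' ∈ G.scc j)
    (h' : s(i', j') ∈ G.Ebi) :
    G.IE = (DMG.mk G.Ed (insert s(i, j) G.Ebi)).IE :=
  add_parallel_bidirected_edge_general G hi' hj' h'

end ESepPaper
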